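/- Fix an integer n ≥ 1 and set c = 1 + 1/log T. If T is admissible (|T − γ| ≥ δ/log T for every ordinate γ of a non-trivial zero of ζ, for some fixed δ > 0), then ∫_{1−c}^{c} |(ζ'/ζ)(σ + iT)| · |ζ^{(n)}(σ + iT)| dσ ≪ T^{1/2} log^{n+2} T, with implied constant depending only on n and δ. -/

import Mathlib

open Complex

/-- A non-trivial zero of the Riemann zeta function. -/
def IsNontrivialZero (ρ : ℂ) : Prop :=
  riemannZeta ρ = 0 ∧ 0 < ρ.re ∧ ρ.re < 1

/-- `T` is admissible: `|T - γ| ≥ δ / log T` for every ordinate `γ` of a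
non-trivial zero of `ζ`. -/
def AdmissibleHeight (δ T : ℝ) : Prop :=
  ∀ ρ : ℂ, IsNontrivialZero ρ → δ / Real.log T ≤ |T - ρ.im|

/-!
On the line `im s = T` both factors are bounded pointwise. If `ζ` had no zero near the segment,
Borel–Carathéodory applied to a logarithm of `ζ` on a disc about `3 + iT` would bound `ζ'/ζ` by
`O(log T)`, because `ζ` grows polynomially. Dividing by Blaschke factors removes the zeros; by
Jensen's argument there are `O(log T)` of them, and each contributes at most
`log T / δ + O(1)` when `T` is admissible. Hence `ζ'/ζ ≪ log² T`.

The functional equation and the maximum principle give the convexity bound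
`ζ(s) ≪ log T · T^{(1 - σ) / 2}` in the strip `-2 / log T ≤ σ ≤ 1 + 2 / log T`, which Cauchy's
estimate on circles of radius `1 / log T` turns into `ζ^{(n)} ≪ log^{n+1} T · T^{(1 - σ) / 2}`.
Integrating `T^{(1 - σ) / 2}` from `1 - c` to `c` gains a factor `log T`.
-/

section Landau

open Metric ComplexConjugate

variable {f : ℂ → ℂ} {c z₀ z ρ : ℂ} {d r r₁ R M : ℝ}

theorem exists_eq_mul_exp_of_forall_ball_ne_zero (hf : DifferentiableOn ℂ f (ball c R))
    (hne : ∀ z ∈ ball c R, f z ≠ 0) :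
    ∃ h : ℂ → ℂ, h c = 0 ∧ (∀ z ∈ ball c R, HasDerivAt h (logDeriv f z) z) ∧
      ∀ z ∈ ball c R, f z = f c * exp (h z) := by
  have hlog : DifferentiableOn ℂ (logDeriv f) (ball c R) :=
    (hf.deriv isOpen_ball).div hf hne
  obtain ⟨g, hg⟩ := hlog.isExactOn_ball
  have hderiv : ∀ w ∈ ball c R, HasDerivAt (fun z ↦ f z * exp (-(g z - g c))) 0 w := by
    intro w hw
    have hfw := (hf.differentiableAt (isOpen_ball.mem_nhds hw)).hasDerivAt
    refine (hfw.mul ((hg w hw).sub_const (g c)).neg.cexp).congr_deriv ?_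
    have := hne w hw
    rw [logDeriv_apply]
    field_simp
    ring
  refine ⟨fun z ↦ g z - g c, sub_self _, fun z hz ↦ (hg z hz).sub_const _, fun z hz ↦ ?_⟩
  have hconst := isOpen_ball.is_const_of_deriv_eq_zero (𝕜 := ℂ) (convex_ball c R).isPreconnected
    (fun w hw ↦ (hderiv w hw).differentiableAt.differentiableWithinAt)
    (fun w hw ↦ (hderiv w hw).deriv) hz (mem_ball_self (pos_of_mem_ball hz))
  simp only [sub_self, neg_zero, exp_zero, mul_one] at hconst
  rw [← hconst, mul_assoc, ← exp_add, neg_add_cancel, exp_zero, mul_one]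

theorem norm_logDeriv_le_of_forall_ball_ne_zero (hr : r < R) (hM : 0 < M)
    (hf : DifferentiableOn ℂ f (ball 0 R)) (hne : ∀ z ∈ ball 0 R, f z ≠ 0)
    (hbound : ∀ z ∈ ball 0 R, ‖f z‖ ≤ Real.exp M * ‖f 0‖) (hz₀ : ‖z₀‖ ≤ r) :
    ‖logDeriv f z₀‖ ≤ 4 * (R + r) / (R - r) ^ 2 * M := by
  have hR : 0 < R := (norm_nonneg z₀).trans_lt (hz₀.trans_lt hr)
  obtain ⟨h, h_zero, h_deriv, h_exp⟩ := exists_eq_mul_exp_of_forall_ball_ne_zero hf hne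
  have h_diff : DifferentiableOn ℂ h (ball 0 R) := fun z hz ↦
    (h_deriv z hz).differentiableAt.differentiableWithinAt
  have h_re : Set.MapsTo h (ball 0 R) {z | z.re ≤ M} := by
    intro z hz
    have hfz := hbound z hz
    rw [h_exp z hz, norm_mul, norm_exp, mul_comm] at hfz
    exact Real.exp_le_exp.1
      (le_of_mul_le_mul_right hfz (norm_pos_iff.2 (hne 0 (mem_ball_self hR))))
  have h_sphere : ∀ w ∈ closedBall z₀ ((R - r) / 2), ‖w‖ ≤ (R + r) / 2 := by
    intro w hw
    have := norm_le_norm_add_norm_sub z₀ w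
    rw [mem_closedBall_iff_norm, norm_sub_rev] at hw
    linarith
  have h_norm : ∀ w ∈ sphere z₀ ((R - r) / 2), ‖h w‖ ≤ 2 * M * (R + r) / (R - r) := by
    intro w hw
    have hw' := h_sphere w (sphere_subset_closedBall hw)
    refine (borelCaratheodory_zero hM h_diff h_re hR
      (mem_ball_zero_iff.2 (by linarith)) h_zero).trans ?_
    rw [div_le_div_iff₀ (by linarith) (by linarith)]
    nlinarith [mul_pos hM hR, mul_nonneg hM.le (sub_nonneg.2 hw')]
  have h_cauchy := norm_deriv_le_of_forall_mem_sphere_norm_le (by linarith)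
    ((h_diff.mono fun w hw ↦ mem_ball_zero_iff.2
      ((h_sphere w hw).trans_lt (by linarith))).diffContOnCl_ball subset_rfl) h_norm
  rw [(h_deriv z₀ (mem_ball_zero_iff.2 (hz₀.trans_lt hr))).deriv] at h_cauchy
  refine h_cauchy.trans_eq ?_
  have : R - r ≠ 0 := (sub_pos.2 hr).ne'
  field_simp
  ring

/-- The function `f`, supposed to vanish at `ρ`, divided by the Blaschke factor
`R * (z - ρ) / (R ^ 2 - conj ρ * z)` of the disc `‖z‖ < R`; the division by `z - ρ` is a `dslope`,
so that the value at `ρ` is the correct one. -/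
noncomputable def blaschkeQuotient (R : ℝ) (ρ : ℂ) (f : ℂ → ℂ) (z : ℂ) : ℂ :=
  dslope f ρ z * ((R ^ 2 - conj ρ * z) / R)

theorem eq_sub_mul_dslope_of_eq_zero (hfρ : f ρ = 0) (z : ℂ) : f z = (z - ρ) * dslope f ρ z := by
  simpa [hfρ] using (sub_smul_dslope f ρ z).symm

theorem mul_sub_le_norm_sq_sub_conj_mul (hR : 0 ≤ R) (hρ : ‖ρ‖ ≤ R) (hz : ‖z‖ ≤ r) :
    R * (R - r) ≤ ‖R ^ 2 - conj ρ * z‖ := by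
  have hconj : ‖conj ρ * z‖ ≤ R * r := by
    rw [norm_mul, RCLike.norm_conj]
    gcongr
  have hsq : ‖(R : ℂ) ^ 2‖ = R ^ 2 := by simp
  have := norm_sub_norm_le ((R : ℂ) ^ 2) (conj ρ * z)
  nlinarith

theorem sq_sub_conj_mul_ne_zero (hρ : ‖ρ‖ ≤ R) (hz : ‖z‖ < R) : (R : ℂ) ^ 2 - conj ρ * z ≠ 0 := by
  have hR : 0 < R := (norm_nonneg z).trans_lt hz
  exact norm_pos_iff.1 ((mul_pos hR (sub_pos.2 hz)).trans_le
    (mul_sub_le_norm_sq_sub_conj_mul hR.le hρ le_rfl))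

theorem diffContOnCl_blaschkeQuotient (hf : DiffContOnCl ℂ f (ball 0 R)) (hρ : ‖ρ‖ < R) :
    DiffContOnCl ℂ (blaschkeQuotient R ρ f) (ball 0 R) := by
  have hmem : ball 0 R ∈ nhds ρ := isOpen_ball.mem_nhds (mem_ball_zero_iff.2 hρ)
  have hdslope : DiffContOnCl ℂ (dslope f ρ) (ball 0 R) :=
    ⟨(differentiableOn_dslope hmem).2 hf.differentiableOn,
      (continuousOn_dslope (Filter.mem_of_superset hmem subset_closure)).2
        ⟨hf.continuousOn, hf.differentiableAt isOpen_ball (mem_ball_zero_iff.2 hρ)⟩⟩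
  have hfactor : Differentiable ℂ fun z : ℂ ↦ ((R : ℂ) ^ 2 - conj ρ * z) / R := by fun_prop
  exact hdslope.smul hfactor.diffContOnCl

theorem norm_blaschkeQuotient_of_norm_eq (hR : 0 < R) (hfρ : f ρ = 0) (hz : ‖z‖ = R) :
    ‖blaschkeQuotient R ρ f z‖ = ‖f z‖ := by
  have hfactor : (R : ℂ) ^ 2 - conj ρ * z = conj (z - ρ) * z := by
    rw [map_sub, sub_mul, conj_mul', hz]
  rw [blaschkeQuotient, hfactor, eq_sub_mul_dslope_of_eq_zero hfρ z, norm_mul, norm_div, norm_mul,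
    RCLike.norm_conj, hz, norm_real, Real.norm_of_nonneg hR.le, mul_div_cancel_right₀ _ hR.ne',
    norm_mul, mul_comm]

theorem norm_mul_norm_blaschkeQuotient_zero (hR : 0 < R) (hfρ : f ρ = 0) :
    ‖ρ‖ * ‖blaschkeQuotient R ρ f 0‖ = R * ‖f 0‖ := by
  have hR' : (R : ℂ) ≠ 0 := ofReal_ne_zero.2 hR.ne'
  rw [blaschkeQuotient, eq_sub_mul_dslope_of_eq_zero hfρ 0, mul_zero, sub_zero, sq,
    mul_div_cancel_right₀ _ hR', norm_mul, norm_mul, norm_real, Real.norm_of_nonneg hR.le,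
    zero_sub, norm_neg]
  ring

theorem eq_zero_of_blaschkeQuotient_eq_zero (hρ : ‖ρ‖ ≤ R) (hfρ : f ρ = 0) (hz : ‖z‖ < R)
    (h : blaschkeQuotient R ρ f z = 0) : f z = 0 := by
  have hR : (R : ℂ) ≠ 0 := ofReal_ne_zero.2 ((norm_nonneg z).trans_lt hz).ne'
  have hdslope := (mul_eq_zero.1 h).resolve_right (div_ne_zero (sq_sub_conj_mul_ne_zero hρ hz) hR)
  rw [eq_sub_mul_dslope_of_eq_zero hfρ z, hdslope, mul_zero]

theorem norm_blaschkeQuotient_le (hf : DiffContOnCl ℂ f (ball 0 R)) (hr₁ : 0 < r₁) (hr₁R : r₁ < R)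
    (hbound : ∀ z ∈ closedBall 0 R, ‖f z‖ ≤ Real.exp M * ‖f 0‖) (hρ : ‖ρ‖ ≤ r₁) (hfρ : f ρ = 0)
    (hz : z ∈ closedBall 0 R) :
    ‖blaschkeQuotient R ρ f z‖ ≤
      Real.exp (M - Real.log (R / r₁)) * ‖blaschkeQuotient R ρ f 0‖ := by
  have hR : 0 < R := hr₁.trans hr₁R
  have hmax : ‖blaschkeQuotient R ρ f z‖ ≤ Real.exp M * ‖f 0‖ := by
    refine norm_le_of_forall_mem_frontier_norm_le isBounded_ball
      (diffContOnCl_blaschkeQuotient hf (hρ.trans_lt hr₁R)) (fun w hw ↦ ?_)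
      (by rwa [closure_ball _ hR.ne'])
    rw [frontier_ball _ hR.ne'] at hw
    rw [norm_blaschkeQuotient_of_norm_eq hR hfρ (mem_sphere_zero_iff_norm.1 hw)]
    exact hbound w (sphere_subset_closedBall hw)
  have hzero : ‖f 0‖ ≤ r₁ / R * ‖blaschkeQuotient R ρ f 0‖ := by
    rw [div_mul_eq_mul_div, le_div_iff₀ hR, mul_comm, ← norm_mul_norm_blaschkeQuotient_zero hR hfρ]
    gcongr
  calc _ ≤ Real.exp M * (r₁ / R * ‖blaschkeQuotient R ρ f 0‖) := hmax.trans (by gcongr)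
    _ = _ := by
      rw [Real.exp_sub, Real.exp_log (div_pos hR hr₁), ← mul_assoc, div_div_eq_mul_div,
        mul_div_assoc]

theorem logDeriv_eq_logDeriv_blaschkeQuotient_add (hf : DiffContOnCl ℂ f (ball 0 R))
    (hρ : ‖ρ‖ < R) (hfρ : f ρ = 0) (hz : ‖z‖ < R) (hfz : f z ≠ 0) :
    logDeriv f z = logDeriv (blaschkeQuotient R ρ f) z +
      (1 / (z - ρ) + conj ρ / (R ^ 2 - conj ρ * z)) := by
  have hR : (R : ℂ) ≠ 0 := ofReal_ne_zero.2 ((norm_nonneg z).trans_lt hz).ne'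
  have hq : (R : ℂ) ^ 2 - conj ρ * z ≠ 0 := sq_sub_conj_mul_ne_zero hρ.le hz
  have hf_eq : f = fun w ↦ (w - ρ) * dslope f ρ w := funext (eq_sub_mul_dslope_of_eq_zero hfρ)
  have hsub : z - ρ ≠ 0 ∧ dslope f ρ z ≠ 0 :=
    mul_ne_zero_iff.1 (eq_sub_mul_dslope_of_eq_zero hfρ z ▸ hfz)
  have hdslope : DifferentiableAt ℂ (dslope f ρ) z :=
    ((differentiableOn_dslope (isOpen_ball.mem_nhds (mem_ball_zero_iff.2 hρ))).2
      hf.differentiableOn).differentiableAt (isOpen_ball.mem_nhds (mem_ball_zero_iff.2 hz))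
  have hlog : logDeriv f z = 1 / (z - ρ) + logDeriv (dslope f ρ) z := by
    conv_lhs => rw [hf_eq]
    rw [logDeriv_mul (f := fun w ↦ w - ρ) z hsub.1 hsub.2 (by fun_prop) hdslope]
    simp [logDeriv_apply]
  have hlog_quot : logDeriv (blaschkeQuotient R ρ f) z =
      logDeriv (dslope f ρ) z - conj ρ / (R ^ 2 - conj ρ * z) := by
    unfold blaschkeQuotient
    rw [logDeriv_mul (g := fun w ↦ ((R : ℂ) ^ 2 - conj ρ * w) / R) z hsub.2
      (div_ne_zero hq hR) hdslope (by fun_prop)]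
    simp only [logDeriv_apply, deriv_div_const, deriv_const_sub, deriv_const_mul_id']
    field_simp
    ring
  rw [hlog, hlog_quot]
  ring

theorem norm_logDeriv_le_norm_logDeriv_blaschkeQuotient_add
    (hf : DiffContOnCl ℂ f (ball 0 R)) (hr₁ : r₁ < R) (hd : 0 < d) (hρ : ‖ρ‖ ≤ r₁)
    (hfρ : f ρ = 0) (hz : ‖z‖ ≤ r₁) (hzρ : d ≤ ‖z - ρ‖) :
    ‖logDeriv f z‖ ≤ ‖logDeriv (blaschkeQuotient R ρ f) z‖ + (1 / d + 1 / (R - r₁)) := by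
  have hRr : 0 < R - r₁ := sub_pos.2 hr₁
  have hR : 0 < R := (norm_nonneg z).trans_lt (hz.trans_lt hr₁)
  rcases eq_or_ne (f z) 0 with hfz | hfz
  · rw [logDeriv_apply, hfz, div_zero, norm_zero]
    positivity
  rw [logDeriv_eq_logDeriv_blaschkeQuotient_add hf (hρ.trans_lt hr₁) hfρ (hz.trans_lt hr₁) hfz]
  refine (norm_add_le _ _).trans (add_le_add_right ((norm_add_le _ _).trans ?_) _)
  gcongr
  · rw [norm_div, norm_one]
    gcongr
  · have hq := mul_sub_le_norm_sq_sub_conj_mul hR.le (hρ.trans hr₁.le) hz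
    rw [norm_div, RCLike.norm_conj, div_le_div_iff₀ ((mul_pos hR hRr).trans_le hq) hRr]
    nlinarith

/-- Each division by a Blaschke factor lowers `M` by `log (R / r₁)` and leaves it nonnegative, so
that fewer than `k` of them are possible. -/
theorem norm_logDeriv_le_of_lt_mul_log {M₀ : ℝ} {k : ℕ} (hr : r < r₁) (hr₁ : r₁ < R) (hd : 0 < d)
    (hM₀ : 0 < M₀) (hM : M ≤ M₀) (hMk : M < k * Real.log (R / r₁))
    (hf : DiffContOnCl ℂ f (ball 0 R)) (hf0 : f 0 ≠ 0)
    (hbound : ∀ z ∈ closedBall 0 R, ‖f z‖ ≤ Real.exp M * ‖f 0‖) (hz₀ : ‖z₀‖ ≤ r)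
    (hzeros : ∀ ρ ∈ closedBall 0 r₁, f ρ = 0 → d ≤ ‖z₀ - ρ‖) :
    ‖logDeriv f z₀‖ ≤ 4 * (r₁ + r) / (r₁ - r) ^ 2 * M₀ +
      M / Real.log (R / r₁) * (1 / d + 1 / (R - r₁)) := by
  have hr₁_pos : 0 < r₁ := (norm_nonneg z₀).trans_lt (hz₀.trans_lt hr)
  have hR_pos : 0 < R := hr₁_pos.trans hr₁
  have : 0 < R - r₁ := sub_pos.2 hr₁
  have hlog : 0 < Real.log (R / r₁) := Real.log_pos ((one_lt_div hr₁_pos).2 hr₁)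
  have hM_nonneg : 0 ≤ M := Real.one_le_exp_iff.1 ((le_mul_iff_one_le_left
    (norm_pos_iff.2 hf0)).1 (hbound 0 (mem_closedBall_self hR_pos.le)))
  induction k generalizing f M with
  | zero => simp only [Nat.cast_zero, zero_mul] at hMk; linarith
  | succ k ih =>
    by_cases hne : ∀ z ∈ ball 0 r₁, f z ≠ 0
    · have hfree := norm_logDeriv_le_of_forall_ball_ne_zero hr hM₀
        (hf.differentiableOn.mono (ball_subset_ball hr₁.le)) hne (fun z hz ↦ (hbound z
          (ball_subset_closedBall (ball_subset_ball hr₁.le hz))).trans (by gcongr)) hz₀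
      exact hfree.trans (le_add_of_nonneg_right (by positivity))
    push Not at hne
    obtain ⟨ρ, hρ_mem, hfρ⟩ := hne
    have hρ : ‖ρ‖ ≤ r₁ := (mem_ball_zero_iff.1 hρ_mem).le
    have hdρ := hzeros ρ (ball_subset_closedBall hρ_mem) hfρ
    have hquot_zero {w : ℂ} (hw : ‖w‖ ≤ r₁) :=
      eq_zero_of_blaschkeQuotient_eq_zero (hρ.trans hr₁.le) hfρ (hw.trans_lt hr₁)
    have hquot0 : blaschkeQuotient R ρ f 0 ≠ 0 := fun h ↦
      hf0 (hquot_zero (norm_zero.trans_le hr₁_pos.le) h)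
    have hquot_bound := fun z (hz : z ∈ closedBall (0 : ℂ) R) ↦
      norm_blaschkeQuotient_le hf hr₁_pos hr₁ hbound hρ hfρ hz
    have hquot_nonneg : 0 ≤ M - Real.log (R / r₁) := Real.one_le_exp_iff.1
      ((le_mul_iff_one_le_left (norm_pos_iff.2 hquot0)).1
        (hquot_bound 0 (mem_closedBall_self hR_pos.le)))
    have hquot := ih (by linarith) (by push_cast at hMk; linarith)
      (diffContOnCl_blaschkeQuotient hf (hρ.trans_lt hr₁)) hquot0 hquot_bound
      (fun w hw hw0 ↦ hzeros w hw (hquot_zero (mem_closedBall_zero_iff.1 hw) hw0)) hquot_nonneg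
    have hstep := norm_logDeriv_le_norm_logDeriv_blaschkeQuotient_add hf hr₁ hd hρ hfρ
      (hz₀.trans hr.le) hdρ
    rw [sub_div, div_self hlog.ne'] at hquot
    linarith

theorem norm_logDeriv_le_of_forall_zero_le_norm_sub (hr : r < r₁) (hr₁ : r₁ < R) (hd : 0 < d)
    (hM : 0 < M) (hf : DiffContOnCl ℂ f (ball c R)) (hfc : f c ≠ 0)
    (hbound : ∀ z ∈ closedBall c R, ‖f z‖ ≤ Real.exp M * ‖f c‖) (hz₀ : ‖z₀ - c‖ ≤ r)
    (hzeros : ∀ ρ ∈ closedBall c r₁, f ρ = 0 → d ≤ ‖z₀ - ρ‖) :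
    ‖logDeriv f z₀‖ ≤ (4 * (r₁ + r) / (r₁ - r) ^ 2 +
      (1 / d + 1 / (R - r₁)) / Real.log (R / r₁)) * M := by
  have hr₁_pos : 0 < r₁ := (norm_nonneg _).trans_lt (hz₀.trans_lt hr)
  have hlog : 0 < Real.log (R / r₁) := Real.log_pos ((one_lt_div hr₁_pos).2 hr₁)
  obtain ⟨k, hk⟩ := exists_nat_gt (M / Real.log (R / r₁))
  have hmaps : Set.MapsTo (c + ·) (ball 0 R) (ball c R) := fun z hz ↦ by simpa using hz
  have hadd {z : ℂ} {s : ℝ} (hz : z ∈ closedBall 0 s) : c + z ∈ closedBall c s := by simpa using hz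
  have h := norm_logDeriv_le_of_lt_mul_log (f := fun z ↦ f (c + z)) hr hr₁ hd hM le_rfl
    ((div_lt_iff₀ hlog).1 hk)
    (hf.comp (differentiable_id.const_add c).diffContOnCl hmaps)
    (by rwa [add_zero]) (fun z hz ↦ by simpa using hbound _ (hadd hz)) hz₀
    (fun ρ hρ hfρ ↦ by simpa [sub_add_eq_sub_sub] using hzeros _ (hadd hρ) hfρ)
  rw [logDeriv_apply, deriv_comp_const_add, add_sub_cancel, ← logDeriv_apply] at h
  refine h.trans_eq ?_
  ring

end Landau

section VerticalStrips

open MeasureTheory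

theorem exists_norm_mellin_le {E : Type*} [NormedAddCommGroup E] [NormedSpace ℂ E] {f : ℝ → E}
    {a b : ℝ} (ha : MellinConvergent f a) (hb : MellinConvergent f b) :
    ∃ C, ∀ s : ℂ, a ≤ s.re → s.re ≤ b → ‖mellin f s‖ ≤ C := by
  refine ⟨∫ t in Set.Ioi (0 : ℝ), ‖(t : ℂ) ^ ((a : ℂ) - 1) • f t‖ + ‖(t : ℂ) ^ ((b : ℂ) - 1) • f t‖,
    fun s hsa hsb ↦ norm_integral_le_of_norm_le (ha.norm.add hb.norm) ?_⟩
  refine (ae_restrict_iff' measurableSet_Ioi).2 (Filter.Eventually.of_forall fun t ht ↦ ?_)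
  rw [Set.mem_Ioi] at ht
  simp only [norm_smul, norm_cpow_eq_rpow_re_of_pos ht, sub_re, ofReal_re, one_re, ← add_mul]
  gcongr
  rcases le_total 1 t with h | h
  · exact (Real.rpow_le_rpow_of_exponent_le h (sub_le_sub_right hsb 1)).trans
      (le_add_of_nonneg_left (by positivity))
  · exact (Real.rpow_le_rpow_of_exponent_ge ht h (sub_le_sub_right hsa 1)).trans
      (le_add_of_nonneg_right (by positivity))

theorem exists_norm_Gamma_le {a : ℝ} (b : ℝ) (ha : 0 < a) :
    ∃ C, ∀ s : ℂ, a ≤ s.re → s.re ≤ b → ‖Gamma s‖ ≤ C := by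
  have hconv {x : ℝ} (hx : 0 < x) : MellinConvergent (fun t : ℝ ↦ (Real.exp (-t) : ℂ)) x := by
    refine (GammaIntegral_convergent (s := x) (by simpa using hx)).congr_fun (fun t _ ↦ ?_)
      measurableSet_Ioi
    rw [smul_eq_mul, mul_comm]
  rcases lt_or_ge b a with hba | hab
  · exact ⟨0, fun s hsa hsb ↦ absurd (hsa.trans hsb) hba.not_ge⟩
  obtain ⟨C, hC⟩ := exists_norm_mellin_le (hconv ha) (hconv (ha.trans_le hab))
  refine ⟨C, fun s hsa hsb ↦ ?_⟩
  rw [Gamma_eq_integral (ha.trans_le hsa), GammaIntegral_eq_mellin]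
  exact hC s hsa hsb

theorem exists_norm_completedRiemannZeta₀_le (a b : ℝ) :
    ∃ C, ∀ s : ℂ, a ≤ s.re → s.re ≤ b → ‖completedRiemannZeta₀ s‖ ≤ C := by
  have hconv (x : ℝ) : MellinConvergent (HurwitzZeta.hurwitzEvenFEPair 0).f_modif x :=
    ((HurwitzZeta.hurwitzEvenFEPair 0).isStrongFEPair_toStrongFEPair.hasMellin x).1
  obtain ⟨C, hC⟩ := exists_norm_mellin_le (hconv (a / 2)) (hconv (b / 2))
  refine ⟨C / 2, fun s hsa hsb ↦ ?_⟩
  have hmellin : completedRiemannZeta₀ s =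
    mellin (HurwitzZeta.hurwitzEvenFEPair 0).f_modif (s / 2) / 2 := rfl
  rw [hmellin, norm_div, norm_ofNat]
  gcongr
  refine hC _ ?_ ?_ <;> rw [div_ofNat_re] <;> gcongr

theorem norm_cos_le_cosh_im (z : ℂ) : ‖cos z‖ ≤ Real.cosh z.im := by
  rw [Complex.cos, Real.cosh_eq, norm_div, norm_ofNat]
  gcongr
  refine (norm_add_le _ _).trans_eq ?_
  simp only [norm_exp, mul_I_re, neg_mul, neg_re, neg_neg]
  ring

theorem norm_sin_le_cosh_im (z : ℂ) : ‖sin z‖ ≤ Real.cosh z.im := by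
  simpa [cos_sub_pi_div_two] using norm_cos_le_cosh_im (z - Real.pi / 2)

theorem cosh_le_exp_abs (x : ℝ) : Real.cosh x ≤ Real.exp |x| := by
  rw [← Real.cosh_abs, Real.cosh_eq]
  linarith [Real.exp_le_exp.2 (neg_le_self (abs_nonneg x))]

theorem Gamma_ne_zero_of_im_ne_zero {s : ℂ} (hs : s.im ≠ 0) : Gamma s ≠ 0 :=
  Gamma_ne_zero fun m hm ↦ hs (by simp [hm])

theorem inv_Gamma_eq_Gamma_one_sub_mul_sin_div_pi {s : ℂ} (hs : s.im ≠ 0) :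
    (Gamma s)⁻¹ = Gamma (1 - s) * sin (Real.pi * s) / Real.pi := by
  have hΓ := Gamma_ne_zero_of_im_ne_zero hs
  have hΓ' : Gamma (1 - s) ≠ 0 := Gamma_ne_zero_of_im_ne_zero (by simpa using hs)
  have hsin : sin (Real.pi * s) ≠ 0 := fun h ↦
    mul_ne_zero hΓ hΓ' (by rw [Gamma_mul_Gamma_one_sub, h, div_zero])
  have hreflection := Gamma_mul_Gamma_one_sub s
  have hπ : (Real.pi : ℂ) ≠ 0 := ofReal_ne_zero.2 Real.pi_ne_zero
  rw [eq_div_iff hsin] at hreflection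
  rw [eq_div_iff hπ, inv_mul_eq_iff_eq_mul₀ hΓ, ← mul_assoc, hreflection]

theorem exists_norm_inv_Gamma_le (a : ℝ) {b : ℝ} (hb : b < 1) :
    ∃ C > 0, ∀ s : ℂ, a ≤ s.re → s.re ≤ b → s.im ≠ 0 →
      ‖(Gamma s)⁻¹‖ ≤ C * Real.exp (Real.pi * |s.im|) := by
  obtain ⟨C, hC⟩ := exists_norm_Gamma_le (1 - a) (sub_pos.2 hb)
  refine ⟨max C 1, by positivity, fun s hsa hsb hs ↦ ?_⟩
  have hΓ : ‖Gamma (1 - s)‖ ≤ C :=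
    hC _ (by rw [sub_re, one_re]; linarith) (by rw [sub_re, one_re]; linarith)
  have hsin : ‖sin (Real.pi * s)‖ ≤ Real.exp (Real.pi * |s.im|) := by
    refine (norm_sin_le_cosh_im _).trans ((cosh_le_exp_abs _).trans_eq ?_)
    rw [im_ofReal_mul, abs_mul, abs_of_pos Real.pi_pos]
  rw [inv_Gamma_eq_Gamma_one_sub_mul_sin_div_pi hs, norm_div, norm_mul, norm_real,
    Real.norm_of_nonneg Real.pi_pos.le]
  refine (div_le_self (by positivity) (by linarith [Real.pi_gt_three])).trans ?_
  gcongr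
  exact hΓ.trans (le_max_left _ _)

/-- A bound that is far from the truth, but all that the convexity argument needs on the horizontal
sides of its rectangle. -/
theorem exists_norm_riemannZeta_le_exp (a : ℝ) {b : ℝ} (hb : b < 2) :
    ∃ C > 0, ∀ s : ℂ, a ≤ s.re → s.re ≤ b → 1 ≤ |s.im| →
      ‖riemannZeta s‖ ≤ C * Real.exp (Real.pi / 2 * |s.im|) := by
  obtain ⟨C₁, hC₁⟩ := exists_norm_completedRiemannZeta₀_le a b
  obtain ⟨C₂, hC₂, hΓ⟩ := exists_norm_inv_Gamma_le (a / 2) (b := b / 2) (by linarith)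
  refine ⟨max (C₁ + 2) 1 * (Real.pi * C₂), by positivity, fun s hsa hsb hs ↦ ?_⟩
  have hs_im : s.im ≠ 0 := abs_pos.1 (one_pos.trans_le hs)
  have hs_norm : 1 ≤ ‖s‖ := hs.trans (abs_im_le_norm s)
  have hs_norm' : 1 ≤ ‖1 - s‖ := by
    simpa using (by simpa using hs : 1 ≤ |(1 - s).im|).trans (abs_im_le_norm (1 - s))
  have hΛ : ‖completedRiemannZeta₀ s - 1 / s - 1 / (1 - s)‖ ≤ C₁ + 2 := by
    have h₁ : ‖1 / s‖ ≤ 1 := by simpa using inv_le_one_of_one_le₀ hs_norm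
    have h₂ : ‖1 / (1 - s)‖ ≤ 1 := by simpa using inv_le_one_of_one_le₀ hs_norm'
    linarith [norm_sub_le (completedRiemannZeta₀ s - 1 / s) (1 / (1 - s)),
      norm_sub_le (completedRiemannZeta₀ s) (1 / s), hC₁ s hsa hsb]
  have hπ : ‖(Real.pi : ℂ) ^ (-s / 2)‖⁻¹ ≤ Real.pi := by
    rw [norm_cpow_eq_rpow_re_of_pos Real.pi_pos, ← Real.rpow_neg Real.pi_pos.le]
    refine (Real.rpow_le_rpow_of_exponent_le (by linarith [Real.pi_gt_three]) ?_).trans_eq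
      (Real.rpow_one _)
    rw [div_ofNat_re, neg_re]
    linarith
  have hΓs : ‖(Gamma (s / 2))⁻¹‖ ≤ C₂ * Real.exp (Real.pi / 2 * |s.im|) := by
    refine (hΓ (s / 2) ?_ ?_ ?_).trans_eq ?_
    · rw [div_ofNat_re]; linarith
    · rw [div_ofNat_re]; linarith
    · simpa using hs_im
    · rw [div_ofNat_im, abs_div, abs_two, mul_div_assoc', div_mul_eq_mul_div]
  rw [riemannZeta_eq_completedRiemannZeta₀ (norm_pos_iff.1 (one_pos.trans_le hs_norm)),
    norm_div, div_eq_mul_inv, norm_mul, mul_inv, ← norm_inv (Gamma _), mul_assoc _ (_ * _),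
    mul_assoc Real.pi]
  gcongr
  exact hΛ.trans (le_max_left _ _)

end VerticalStrips

section Convexity

variable {f : ℂ → ℂ} {s₀ : ℂ} {a b H M : ℝ}

theorem norm_le_of_forall_rectangle_boundary_norm_le {c d : ℝ} (hab : a < b) (hcd : c < d)
    (hf : DifferentiableOn ℂ f (Set.Icc a b ×ℂ Set.Icc c d))
    (hvert : ∀ s, s.re = a ∨ s.re = b → s.im ∈ Set.Icc c d → ‖f s‖ ≤ M)
    (hhor : ∀ s, s.re ∈ Set.Icc a b → s.im = c ∨ s.im = d → ‖f s‖ ≤ M)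
    (hs₀ : s₀ ∈ Set.Icc a b ×ℂ Set.Icc c d) : ‖f s₀‖ ≤ M := by
  have hclosure : closure (Set.Ioo a b ×ℂ Set.Ioo c d) = Set.Icc a b ×ℂ Set.Icc c d := by
    rw [closure_reProdIm, closure_Ioo hab.ne, closure_Ioo hcd.ne]
  refine norm_le_of_forall_mem_frontier_norm_le
    ((Metric.isBounded_Ioo a b).reProdIm (Metric.isBounded_Ioo c d))
    (DifferentiableOn.diffContOnCl (by rwa [hclosure])) (fun s hs ↦ ?_) (by rwa [hclosure])
  rw [frontier_reProdIm, closure_Ioo hab.ne, closure_Ioo hcd.ne, frontier_Ioo hab,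
    frontier_Ioo hcd] at hs
  exact hs.elim (fun h ↦ hhor s h.1 h.2) fun h ↦ hvert s h.1 h.2

/-- The maximum principle is applied to `f s * exp ((s - s₀) ^ 2)`, whose second factor is at most
`exp ((b - a) ^ 2 - H ^ 2)` on the horizontal sides. -/
theorem norm_le_exp_sq_mul_of_norm_le_on_rectangle (hab : a < b) (hH : 0 < H)
    (hs₀ : s₀.re ∈ Set.Icc a b)
    (hf : ∀ s, s.re ∈ Set.Icc a b → |s.im - s₀.im| ≤ H → DifferentiableAt ℂ f s)
    (hvert : ∀ s, s.re = a ∨ s.re = b → |s.im - s₀.im| ≤ H → ‖f s‖ ≤ M)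
    (hhor : ∀ s, s.re ∈ Set.Icc a b → |s.im - s₀.im| = H → ‖f s‖ ≤ M * Real.exp (H ^ 2)) :
    ‖f s₀‖ ≤ Real.exp ((b - a) ^ 2) * M := by
  have hM : 0 ≤ M := (norm_nonneg _).trans
    (hvert ⟨a, s₀.im⟩ (Or.inl rfl) (by simpa using hH.le))
  have hIcc {x : ℝ} : x ∈ Set.Icc (s₀.im - H) (s₀.im + H) ↔ |x - s₀.im| ≤ H := by
    rw [abs_sub_comm, Set.mem_Icc_iff_abs_le]
  have hsq {x : ℝ} (hx : x ∈ Set.Icc a b) : (x - s₀.re) ^ 2 ≤ (b - a) ^ 2 :=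
    sq_le_sq' (by linarith [hx.1, hs₀.2]) (by linarith [hx.2, hs₀.1])
  have hnorm (s : ℂ) : ‖f s * exp ((s - s₀) ^ 2)‖ =
      ‖f s‖ * Real.exp ((s.re - s₀.re) ^ 2 - |s.im - s₀.im| ^ 2) := by
    rw [norm_mul, norm_exp, sq_abs, sq (s - s₀), mul_re, sub_re, sub_im, sq, sq]
  have hmax : ‖f s₀ * exp ((s₀ - s₀) ^ 2)‖ ≤ Real.exp ((b - a) ^ 2) * M := by
    refine norm_le_of_forall_rectangle_boundary_norm_le (f := fun s ↦ f s * exp ((s - s₀) ^ 2))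
      hab (by linarith : s₀.im - H < s₀.im + H) (fun s hs ↦ ?_) (fun s hre him ↦ ?_)
      (fun s hre him ↦ ?_) ⟨hs₀, hIcc.2 (by simpa using hH.le)⟩
    · exact ((hf s hs.1 (hIcc.1 hs.2)).mul (by fun_prop)).differentiableWithinAt
    · have hre_mem : s.re ∈ Set.Icc a b := by
        rcases hre with h | h <;> rw [h] <;> simp [hab.le]
      rw [hnorm, mul_comm]
      gcongr
      · exact (sub_le_self _ (sq_nonneg _)).trans (hsq hre_mem)
      · exact hvert s hre (hIcc.1 him)
    · have him_abs : |s.im - s₀.im| = H := by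
        rcases him with h | h <;> rw [h] <;> simp [hH.le]
      rw [hnorm, him_abs]
      calc ‖f s‖ * Real.exp ((s.re - s₀.re) ^ 2 - H ^ 2)
          ≤ M * Real.exp (H ^ 2) * Real.exp ((b - a) ^ 2 - H ^ 2) := by
            gcongr ?_ * Real.exp (?_ - _)
            exacts [hhor s hre him_abs, hsq hre]
        _ = Real.exp ((b - a) ^ 2) * M := by
            rw [mul_assoc, ← Real.exp_add, add_sub_cancel, mul_comm]
  simpa using hmax

theorem norm_le_exp_sq_mul_rpow_of_norm_le_on_rectangle {X p q : ℝ} (hX : 0 < X) (hab : a < b)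
    (hH : 0 < H) (hs₀ : s₀.re ∈ Set.Icc a b)
    (hf : ∀ s, s.re ∈ Set.Icc a b → |s.im - s₀.im| ≤ H → DifferentiableAt ℂ f s)
    (hvert : ∀ s, s.re = a ∨ s.re = b → |s.im - s₀.im| ≤ H → ‖f s‖ ≤ M * X ^ (p * s.re + q))
    (hhor : ∀ s, s.re ∈ Set.Icc a b → |s.im - s₀.im| = H →
      ‖f s‖ ≤ M * Real.exp (H ^ 2) * X ^ (p * s.re + q)) :
    ‖f s₀‖ ≤ Real.exp ((b - a) ^ 2) * M * X ^ (p * s₀.re + q) := by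
  have hX' : (X : ℂ) ≠ 0 := ofReal_ne_zero.2 hX.ne'
  have norm_quot (s : ℂ) : ‖f s / (X : ℂ) ^ (p * s + q)‖ = ‖f s‖ / X ^ (p * s.re + q) := by
    rw [norm_div, norm_cpow_eq_rpow_re_of_pos hX, add_re, re_ofReal_mul, ofReal_re]
  have h := norm_le_exp_sq_mul_of_norm_le_on_rectangle (s₀ := s₀) (M := M)
    (f := fun s ↦ f s / (X : ℂ) ^ (p * s + q)) hab hH hs₀
    (fun s hre him ↦ (hf s hre him).div
      (DifferentiableAt.const_cpow (by fun_prop) (Or.inl hX')) (by simp [cpow_eq_zero_iff, hX']))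
    (fun s hre him ↦ by
      rw [norm_quot, div_le_iff₀ (by positivity)]
      exact hvert s hre him)
    (fun s hre him ↦ by
      rw [norm_quot, div_le_iff₀ (by positivity)]
      exact hhor s hre him)
  rwa [norm_quot, div_le_iff₀ (by positivity)] at h

end Convexity

section GammaCos

theorem norm_Gamma_sq_mul_cosh_of_re_eq_half {s : ℂ} (hs : s.re = 1 / 2) :
    ‖Gamma s‖ ^ 2 * Real.cosh (Real.pi * s.im) = Real.pi := by
  have hconj : 1 - s = (starRingEnd ℂ) s := by
    apply Complex.ext
    · rw [sub_re, one_re, conj_re, hs]; norm_num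
    · simp
  have hsin : sin (Real.pi * s) = (Real.cosh (Real.pi * s.im) : ℝ) := by
    have : (Real.pi : ℂ) * s = Real.pi / 2 - (-(Real.pi * s.im : ℝ) * I) := by
      apply Complex.ext <;> simp [hs]; ring
    rw [this, sin_pi_div_two_sub, cos_mul_I, cosh_neg, ofReal_cosh]
  have h := congrArg norm (Gamma_mul_Gamma_one_sub s)
  rw [hconj, Gamma_conj, norm_mul, norm_conj, hsin, norm_div, norm_real, norm_real,
    Real.norm_of_nonneg Real.pi_pos.le, Real.norm_of_nonneg (Real.cosh_pos _).le,
    eq_div_iff (Real.cosh_pos _).ne', ← sq] at h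
  exact h

theorem norm_Gamma_mul_cosh_le_of_re_eq_half {s : ℂ} (hs : s.re = 1 / 2) :
    ‖Gamma s‖ * Real.cosh (Real.pi / 2 * s.im) ≤ 2 := by
  have hcosh : Real.cosh (Real.pi / 2 * s.im) ^ 2 ≤ Real.cosh (Real.pi * s.im) := by
    have h := Real.cosh_two_mul (Real.pi / 2 * s.im)
    rw [show 2 * (Real.pi / 2 * s.im) = Real.pi * s.im by ring] at h
    linarith [sq_nonneg (Real.sinh (Real.pi / 2 * s.im))]
  have hsq : (‖Gamma s‖ * Real.cosh (Real.pi / 2 * s.im)) ^ 2 ≤ 2 ^ 2 := by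
    calc _ = ‖Gamma s‖ ^ 2 * Real.cosh (Real.pi / 2 * s.im) ^ 2 := mul_pow _ _ _
      _ ≤ ‖Gamma s‖ ^ 2 * Real.cosh (Real.pi * s.im) := by gcongr
      _ ≤ 2 ^ 2 := by
        rw [norm_Gamma_sq_mul_cosh_of_re_eq_half hs]
        linarith [Real.pi_lt_four]
  exact le_of_sq_le_sq hsq zero_le_two

theorem norm_cos_pi_mul_div_two_le_cosh (s : ℂ) :
    ‖cos (Real.pi * s / 2)‖ ≤ Real.cosh (Real.pi / 2 * s.im) := by
  refine (norm_cos_le_cosh_im _).trans_eq ?_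
  rw [div_ofNat_im, im_ofReal_mul, div_mul_eq_mul_div]

theorem norm_Gamma_mul_cos_le_of_re_eq_half {s : ℂ} (hs : s.re = 1 / 2) :
    ‖Gamma s * cos (Real.pi * s / 2)‖ ≤ 2 := by
  rw [norm_mul]
  exact (mul_le_mul_of_nonneg_left (norm_cos_pi_mul_div_two_le_cosh s) (norm_nonneg _)).trans
    (norm_Gamma_mul_cosh_le_of_re_eq_half hs)

theorem norm_Gamma_mul_cos_le_of_re_eq_three_half {s : ℂ} (hs : s.re = 3 / 2) :
    ‖Gamma s * cos (Real.pi * s / 2)‖ ≤ 2 * ‖s - 1‖ := by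
  have hre : (s - 1).re = 1 / 2 := by rw [sub_re, one_re, hs]; norm_num
  have hne : s - 1 ≠ 0 := fun h ↦ by norm_num [h] at hre
  have hΓ : Gamma s = (s - 1) * Gamma (s - 1) := by rw [← Gamma_add_one _ hne, sub_add_cancel]
  have hcos := norm_cos_pi_mul_div_two_le_cosh s
  have hΓcosh := norm_Gamma_mul_cosh_le_of_re_eq_half hre
  rw [sub_im, one_im, sub_zero] at hΓcosh
  calc ‖Gamma s * cos (Real.pi * s / 2)‖
      ≤ ‖s - 1‖ * (‖Gamma (s - 1)‖ * Real.cosh (Real.pi / 2 * s.im)) := by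
        rw [hΓ, norm_mul, norm_mul, mul_assoc]
        gcongr
    _ ≤ 2 * ‖s - 1‖ := by rw [mul_comm]; gcongr

theorem abs_mem_Icc_of_abs_sub_le_half {x t : ℝ} (h : |x - t| ≤ |t| / 2) :
    |x| ∈ Set.Icc (|t| / 2) (3 * |t| / 2) := by
  constructor <;>
    linarith [abs_sub_abs_le_abs_sub x t, abs_sub_abs_le_abs_sub t x, abs_sub_comm x t]

theorem exp_pi_div_two_mul_le {x t : ℝ} (ht : 12 ≤ t) (hx : x ≤ 3 * t / 2) :
    Real.exp (Real.pi / 2 * x) ≤ Real.exp ((t / 2) ^ 2) := by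
  refine Real.exp_le_exp.2 ?_
  calc Real.pi / 2 * x ≤ Real.pi / 2 * (3 * t / 2) := by gcongr
    _ ≤ (t / 2) ^ 2 := by nlinarith [Real.pi_lt_four]

theorem norm_Gamma_mul_cos_le_of_re_eq_half_or_three_half {s : ℂ} {t : ℝ} (ht : 2 ≤ |t|)
    (hre : s.re = 1 / 2 ∨ s.re = 3 / 2) (him : |s.im - t| ≤ |t| / 2) :
    ‖Gamma s * cos (Real.pi * s / 2)‖ ≤ 4 * |t| ^ (s.re - 1 / 2) := by
  rcases hre with hre | hre
  · rw [hre, sub_self, Real.rpow_zero]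
    linarith [norm_Gamma_mul_cos_le_of_re_eq_half hre]
  · have hs : ‖s - 1‖ ≤ |(s - 1).re| + |(s - 1).im| := norm_le_abs_re_add_abs_im _
    have habs : |(3 / 2 - 1 : ℝ)| = 1 / 2 := by norm_num
    rw [sub_re, one_re, hre, sub_im, one_im, sub_zero, habs] at hs
    rw [hre, show (3 / 2 - 1 / 2 : ℝ) = 1 by norm_num, Real.rpow_one]
    calc _ ≤ 2 * ‖s - 1‖ := norm_Gamma_mul_cos_le_of_re_eq_three_half hre
      _ ≤ 4 * |t| := by linarith [(abs_mem_Icc_of_abs_sub_le_half him).2]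

theorem exists_norm_Gamma_mul_cos_le :
    ∃ C > 0, ∀ s : ℂ, 1 / 2 ≤ s.re → s.re ≤ 3 / 2 → 12 ≤ |s.im| →
      ‖Gamma s * cos (Real.pi * s / 2)‖ ≤ C * |s.im| ^ (s.re - 1 / 2) := by
  obtain ⟨C, hC⟩ := exists_norm_Gamma_le (3 / 2) (one_half_pos (α := ℝ))
  refine ⟨Real.exp ((3 / 2 - 1 / 2) ^ 2) * max C 4, by positivity, fun s ha hb ht ↦ ?_⟩
  have h := norm_le_exp_sq_mul_rpow_of_norm_le_on_rectangle (s₀ := s) (X := |s.im|)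
    (H := |s.im| / 2) (p := 1) (q := -(1 / 2)) (M := max C 4)
    (f := fun z ↦ Gamma z * cos (Real.pi * z / 2))
    (by linarith) (by norm_num) (by linarith) ⟨ha, hb⟩
    (fun z hre _ ↦ ?_) (fun z hre him ↦ ?_) (fun z hre him ↦ ?_)
  · rwa [one_mul, ← sub_eq_add_neg] at h
  · exact (differentiableAt_Gamma z fun m hm ↦ by
      norm_num [hm] at hre
      linarith [hre.1, m.cast_nonneg (α := ℝ)]).mul (by fun_prop)
  · rw [one_mul, ← sub_eq_add_neg]
    refine (norm_Gamma_mul_cos_le_of_re_eq_half_or_three_half (by linarith) hre him).trans ?_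
    gcongr
    exact le_max_right _ _
  · have hcos : ‖cos (Real.pi * z / 2)‖ ≤ Real.exp ((|s.im| / 2) ^ 2) := by
      refine (norm_cos_pi_mul_div_two_le_cosh z).trans ((cosh_le_exp_abs _).trans ?_)
      rw [abs_mul, abs_of_pos Real.pi_div_two_pos]
      exact exp_pi_div_two_mul_le ht (abs_mem_Icc_of_abs_sub_le_half him.le).2
    rw [norm_mul]
    refine (mul_le_mul ((hC z hre.1 hre.2).trans (le_max_left C 4)) hcos (norm_nonneg _)
      (by positivity)).trans (le_mul_of_one_le_right (by positivity) ?_)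
    exact Real.one_le_rpow (by linarith) (by linarith [hre.1])

end GammaCos

section DirichletSeries

variable {s : ℂ}

theorem tsum_one_div_nat_add_one_rpow_le {σ : ℝ} (hσ : 1 < σ) :
    ∑' n : ℕ, 1 / ((n : ℝ) + 1) ^ σ ≤ 1 + 1 / (σ - 1) := by
  have h := ZetaAsymptotics.zeta_limit_aux1 hσ
  have hnonneg : 0 ≤ ZetaAsymptotics.termTSum σ :=
    tsum_nonneg fun n ↦ ZetaAsymptotics.term_nonneg _ _
  nlinarith

theorem norm_riemannZeta_sub_one_le (hs : 1 < s.re) :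
    ‖riemannZeta s - 1‖ ≤ 1 / (s.re - 1) := by
  have hnorm (n : ℕ) : ‖1 / ((n : ℂ) + 1) ^ s‖ = 1 / ((n : ℝ) + 1) ^ s.re := by
    rw [norm_div, norm_one, ← Nat.cast_add_one, norm_natCast_cpow_of_pos n.succ_pos,
      Nat.cast_add_one]
  have hsum : Summable fun n : ℕ ↦ 1 / ((n : ℝ) + 1) ^ s.re := by
    simpa only [Nat.cast_add_one] using
      (summable_nat_add_iff 1).2 (Real.summable_one_div_nat_rpow.2 hs)
  have hsum_norm : Summable fun n : ℕ ↦ ‖1 / ((n : ℂ) + 1) ^ s‖ := by simpa only [hnorm] using hsum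
  have hζ := hsum_norm.of_norm.tsum_eq_zero_add
  have hreal := hsum.tsum_eq_zero_add
  rw [← zeta_eq_tsum_one_div_nat_add_one_cpow hs] at hζ
  simp only [Nat.cast_zero, zero_add, one_cpow, Real.one_rpow, div_one] at hζ hreal
  have htail : Summable fun n : ℕ ↦ ‖1 / (((n + 1 : ℕ) : ℂ) + 1) ^ s‖ :=
    hsum_norm.comp_injective (add_left_injective 1)
  rw [hζ, add_sub_cancel_left]
  calc _ ≤ ∑' n : ℕ, ‖1 / (((n + 1 : ℕ) : ℂ) + 1) ^ s‖ := norm_tsum_le_tsum_norm htail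
    _ = ∑' n : ℕ, 1 / (((n + 1 : ℕ) : ℝ) + 1) ^ s.re := tsum_congr fun n ↦ hnorm (n + 1)
    _ ≤ 1 / (s.re - 1) := by linarith [tsum_one_div_nat_add_one_rpow_le hs]

theorem norm_riemannZeta_le_of_one_lt_re (hs : 1 < s.re) :
    ‖riemannZeta s‖ ≤ s.re / (s.re - 1) := by
  have h := norm_sub_norm_le (riemannZeta s) 1
  have hre : s.re / (s.re - 1) = 1 + 1 / (s.re - 1) := by
    field_simp [sub_ne_zero.2 hs.ne']
    ring
  rw [norm_one] at h
  linarith [norm_riemannZeta_sub_one_le hs]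

theorem half_le_norm_riemannZeta (hs : 3 ≤ s.re) : 1 / 2 ≤ ‖riemannZeta s‖ := by
  have h := norm_sub_norm_le 1 (riemannZeta s)
  have hle : 1 / (s.re - 1) ≤ 1 / 2 := one_div_le_one_div_of_le two_pos (by linarith)
  rw [norm_one, norm_sub_rev] at h
  linarith [norm_riemannZeta_sub_one_le (by linarith : 1 < s.re)]

end DirichletSeries

section ZetaBounds

theorem exists_norm_riemannZeta_le_of_re_neg :
    ∃ C > 0, ∀ s : ℂ, -(1 / 2) ≤ s.re → s.re < 0 → 12 ≤ |s.im| →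
      ‖riemannZeta s‖ ≤ C / -s.re * |s.im| ^ (1 / 2 - s.re) := by
  obtain ⟨C, hC, hΓcos⟩ := exists_norm_Gamma_mul_cos_le
  refine ⟨2 * C * (3 / 2), by positivity, fun s ha hb ht ↦ ?_⟩
  have him : s.im ≠ 0 := abs_pos.1 (by linarith)
  have hfe := riemannZeta_one_sub (s := 1 - s) (fun m hm ↦ him (by simpa using congrArg im hm))
    (fun h ↦ him (by simpa using congrArg im h))
  have hΓ := hΓcos (1 - s) (by rw [sub_re, one_re]; linarith) (by rw [sub_re, one_re]; linarith)
    (by simpa using ht)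
  have hζ := norm_riemannZeta_le_of_one_lt_re (s := 1 - s) (by rw [sub_re, one_re]; linarith)
  have hπ : ‖(2 * Real.pi : ℂ) ^ (-(1 - s))‖ ≤ 1 := by
    rw [← ofReal_ofNat, ← ofReal_mul, norm_cpow_eq_rpow_re_of_pos Real.two_pi_pos]
    refine Real.rpow_le_one_of_one_le_of_nonpos (by linarith [Real.pi_gt_three]) ?_
    rw [neg_re, sub_re, one_re]
    linarith
  simp only [sub_re, one_re, sub_im, one_im, zero_sub, abs_neg, sub_sub_cancel] at hfe hΓ hζ
  rw [hfe, mul_assoc (2 * _) (Gamma _), norm_mul, norm_mul, norm_mul, norm_ofNat]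
  calc _ ≤ 2 * 1 * (C * |s.im| ^ (1 - s.re - 1 / 2)) * ((3 / 2) / -s.re) := by
        gcongr
        refine hζ.trans ?_
        rw [sub_sub_cancel_left]
        gcongr <;> linarith
    _ = 2 * C * (3 / 2) / -s.re * |s.im| ^ (1 / 2 - s.re) := by
        rw [show 1 - s.re - 1 / 2 = 1 / 2 - s.re by ring]
        ring

theorem rpow_le_two_mul_rpow {x t p : ℝ} (hx : 0 ≤ x) (hxt : x ≤ 3 * t / 2) (hp : 0 ≤ p)
    (hp₁ : p ≤ 1) : x ^ p ≤ 2 * t ^ p := by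
  have ht : 0 ≤ t := by linarith
  calc x ^ p ≤ (2 * t) ^ p := by gcongr; linarith
    _ = 2 ^ p * t ^ p := Real.mul_rpow zero_le_two ht
    _ ≤ 2 * t ^ p := by
      gcongr
      exact (Real.rpow_le_rpow_of_exponent_le one_le_two hp₁).trans_eq (Real.rpow_one 2)

theorem exists_norm_riemannZeta_le_of_re_eq_neg_or_one_add :
    ∃ C > 0, ∀ η : ℝ, 0 < η → η ≤ 1 / 2 → ∀ (t : ℝ) (s : ℂ), 24 ≤ |t| →
      s.re = -η ∨ s.re = 1 + η → |s.im - t| ≤ |t| / 2 →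
        ‖riemannZeta s‖ ≤ C / η * |t| ^ ((1 + η - s.re) / 2) := by
  obtain ⟨C, hC, hleft⟩ := exists_norm_riemannZeta_le_of_re_neg
  refine ⟨2 * C + 3 / 2, by positivity, fun η hη hη₁ t s ht hre him ↦ ?_⟩
  have hs := abs_mem_Icc_of_abs_sub_le_half him
  rcases hre with hre | hre
  · have hζ := hleft s (by linarith) (by linarith) (by linarith [hs.1])
    rw [hre, neg_neg, sub_neg_eq_add] at hζ
    rw [hre, show (1 + η - -η) / 2 = 1 / 2 + η by ring]
    calc _ ≤ C / η * (2 * |t| ^ (1 / 2 + η)) := hζ.trans (by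
            gcongr
            exact rpow_le_two_mul_rpow (abs_nonneg _) hs.2 (by linarith) (by linarith))
      _ = 2 * C / η * |t| ^ (1 / 2 + η) := by ring
      _ ≤ _ := by gcongr; linarith
  · have hζ := norm_riemannZeta_le_of_one_lt_re (s := s) (by linarith)
    rw [hre, add_sub_cancel_left] at hζ
    rw [hre, sub_self, zero_div, Real.rpow_zero, mul_one]
    exact hζ.trans (div_le_div_of_nonneg_right (by linarith) hη.le)

theorem exists_norm_riemannZeta_le_convexity :
    ∃ C > 0, ∀ η : ℝ, 0 < η → η ≤ 1 / 2 → ∀ s : ℂ, -η ≤ s.re → s.re ≤ 1 + η → 24 ≤ |s.im| →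
      ‖riemannZeta s‖ ≤ C / η * |s.im| ^ ((1 + η - s.re) / 2) := by
  obtain ⟨C₁, hC₁, hvert⟩ := exists_norm_riemannZeta_le_of_re_eq_neg_or_one_add
  obtain ⟨C₂, hC₂, hhor⟩ := exists_norm_riemannZeta_le_exp (-(1 / 2)) (b := 3 / 2) (by norm_num)
  refine ⟨Real.exp 4 * (C₁ + C₂), by positivity, fun η hη hη₁ s ha hb ht ↦ ?_⟩
  have hexponent (x : ℝ) : (1 + η - x) / 2 = -(1 / 2) * x + (1 + η) / 2 := by ring
  have h := norm_le_exp_sq_mul_rpow_of_norm_le_on_rectangle (s₀ := s) (X := |s.im|)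
    (H := |s.im| / 2) (p := -(1 / 2)) (q := (1 + η) / 2) (M := (C₁ + C₂) / η)
    (f := riemannZeta) (by linarith) (by linarith) (by linarith) ⟨ha, hb⟩
    (fun z hre him ↦ ?_) (fun z hre him ↦ ?_) (fun z hre him ↦ ?_)
  · rw [← hexponent] at h
    refine h.trans ?_
    rw [mul_div_assoc]
    gcongr
    nlinarith
  · refine differentiableAt_riemannZeta ?_
    rintro rfl
    have := (abs_mem_Icc_of_abs_sub_le_half him).1
    rw [one_im, abs_zero] at this
    linarith
  · rw [← hexponent]
    refine (hvert η hη hη₁ s.im z ht hre him).trans ?_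
    gcongr
    linarith
  · have hz := abs_mem_Icc_of_abs_sub_le_half him.le
    have hζ := hhor z (by linarith [hre.1]) (by linarith [hre.2]) (by linarith [hz.1])
    refine (hζ.trans ?_).trans (le_mul_of_one_le_right (by positivity) ?_)
    · gcongr ?_ * ?_
      · rw [le_div_iff₀ hη]
        nlinarith
      · exact exp_pi_div_two_mul_le (by linarith) hz.2
    · rw [← hexponent]
      exact Real.one_le_rpow (by linarith) (by linarith [hre.2])

theorem exists_norm_riemannZeta_le_mul_abs_im :
    ∃ C > 0, ∀ s : ℂ, -(1 / 2) ≤ s.re → 24 ≤ |s.im| → ‖riemannZeta s‖ ≤ C * |s.im| := by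
  obtain ⟨C, hC, hconvexity⟩ := exists_norm_riemannZeta_le_convexity
  refine ⟨C / (1 / 2) + 1, by positivity, fun s hs ht ↦ ?_⟩
  rcases le_total s.re (3 / 2) with h | h
  · calc ‖riemannZeta s‖ ≤ C / (1 / 2) * |s.im| ^ ((1 + 1 / 2 - s.re) / 2) :=
          hconvexity _ one_half_pos le_rfl s hs (by linarith) ht
      _ ≤ C / (1 / 2) * |s.im| ^ (1 : ℝ) := by gcongr <;> linarith
      _ ≤ (C / (1 / 2) + 1) * |s.im| := by rw [Real.rpow_one]; gcongr; linarith
  · calc ‖riemannZeta s‖ ≤ s.re / (s.re - 1) := norm_riemannZeta_le_of_one_lt_re (by linarith)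
      _ ≤ 3 := by rw [div_le_iff₀] <;> linarith
      _ ≤ (C / (1 / 2) + 1) * |s.im| := by nlinarith [(by positivity : 0 ≤ C / (1 / 2))]

theorem riemannZeta_eq_zero_iff_completedRiemannZeta_eq_zero {s : ℂ} (hs : s.im ≠ 0) :
    riemannZeta s = 0 ↔ completedRiemannZeta s = 0 := by
  have hs₀ : s ≠ 0 := fun h ↦ hs (by simp [h])
  have hΓ : Gammaℝ s ≠ 0 := fun h ↦ by
    obtain ⟨m, hm⟩ := Gammaℝ_eq_zero_iff.1 h
    exact hs (by simp [hm])
  rw [riemannZeta_def_of_ne_zero hs₀, div_eq_zero_iff, or_iff_left hΓ]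

theorem isNontrivialZero_of_im_ne_zero {ρ : ℂ} (hρ : riemannZeta ρ = 0) (him : ρ.im ≠ 0) :
    IsNontrivialZero ρ := by
  have him' : (1 - ρ).im ≠ 0 := by simpa using him
  have hρ' : riemannZeta (1 - ρ) = 0 := by
    rwa [riemannZeta_eq_zero_iff_completedRiemannZeta_eq_zero him', completedRiemannZeta_one_sub,
      ← riemannZeta_eq_zero_iff_completedRiemannZeta_eq_zero him]
  refine ⟨hρ, ?_, not_le.1 fun h ↦ riemannZeta_ne_zero_of_one_le_re h hρ⟩
  have : (1 - ρ).re < 1 := not_le.1 fun h ↦ riemannZeta_ne_zero_of_one_le_re h hρ'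
  simpa using this

end ZetaBounds

section HorizontalLine

open Metric

variable {δ T : ℝ}

theorem four_le_log (hT : 100 ≤ T) : 4 ≤ Real.log T := by
  rw [Real.le_log_iff_exp_le (by linarith)]
  calc Real.exp 4 = Real.exp 1 ^ 4 := by rw [← Real.exp_nat_mul]; norm_num
    _ ≤ 3 ^ 4 := by gcongr; linarith [Real.exp_one_lt_d9]
    _ ≤ T := by linarith

theorem abs_re_sub_le_and_abs_im_sub_le {σ r : ℝ} {z : ℂ} (hz : z ∈ closedBall (σ + T * I) r) :
    |z.re - σ| ≤ r ∧ |z.im - T| ≤ r := by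
  rw [mem_closedBall_iff_norm] at hz
  exact ⟨by simpa using (abs_re_le_norm _).trans hz, by simpa using (abs_im_le_norm _).trans hz⟩

theorem diffContOnCl_riemannZeta_ball {σ r : ℝ} (hr : r < T) :
    DiffContOnCl ℂ riemannZeta (ball (σ + T * I) r) := by
  refine DifferentiableOn.diffContOnCl_ball (U := closedBall (σ + T * I) r) (fun z hz ↦ ?_)
    subset_rfl
  refine (differentiableAt_riemannZeta ?_).differentiableWithinAt
  rintro rfl
  have him := (abs_re_sub_le_and_abs_im_sub_le hz).2
  rw [one_im, zero_sub, abs_neg] at him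
  linarith [le_abs_self T]

theorem exists_norm_riemannZeta_le_exp_log_mul :
    ∃ C > 0, ∀ T : ℝ, 100 ≤ T → ∀ z ∈ closedBall ((3 : ℝ) + T * I) (7 / 2),
      ‖riemannZeta z‖ ≤ Real.exp (C * Real.log T) * ‖riemannZeta ((3 : ℝ) + T * I)‖ := by
  obtain ⟨C, hC, hgrowth⟩ := exists_norm_riemannZeta_le_mul_abs_im
  refine ⟨|Real.log (4 * C)| + 1, by positivity, fun T hT z hz ↦ ?_⟩
  have hlog := four_le_log hT
  obtain ⟨hre, him⟩ := abs_re_sub_le_and_abs_im_sub_le hz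
  rw [abs_le] at hre him
  have hz_im : 0 ≤ z.im := by linarith
  have hcentre := half_le_norm_riemannZeta (s := (3 : ℝ) + T * I) (by simp)
  have hζ := hgrowth z (by linarith) (by rw [abs_of_nonneg hz_im]; linarith)
  rw [abs_of_nonneg hz_im] at hζ
  calc ‖riemannZeta z‖ ≤ C * (2 * T) := hζ.trans (by gcongr; linarith)
    _ = Real.exp (Real.log (4 * C) + Real.log T) * (1 / 2) := by
      rw [Real.exp_add, Real.exp_log (by positivity), Real.exp_log (by linarith)]
      ring
    _ ≤ Real.exp ((|Real.log (4 * C)| + 1) * Real.log T) * ‖riemannZeta ((3 : ℝ) + T * I)‖ := by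
      gcongr
      nlinarith [le_abs_self (Real.log (4 * C)), abs_nonneg (Real.log (4 * C))]

theorem AdmissibleHeight.div_log_le_norm_sub (hT : AdmissibleHeight δ T) {σ : ℝ} {ρ : ℂ}
    (hρ : riemannZeta ρ = 0) (him : ρ.im ≠ 0) : δ / Real.log T ≤ ‖σ + T * I - ρ‖ := by
  refine (hT ρ (isNontrivialZero_of_im_ne_zero hρ him)).trans ?_
  simpa using abs_im_le_norm (σ + T * I - ρ)

theorem AdmissibleHeight.exists_norm_logDeriv_riemannZeta_le (hδ : 0 < δ) :
    ∃ K > 0, ∀ T ≥ 100, AdmissibleHeight δ T → ∀ σ : ℝ, -(1 / 4) ≤ σ → σ ≤ 5 / 4 →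
      ‖logDeriv riemannZeta (σ + T * I)‖ ≤ K * Real.log T ^ 2 := by
  obtain ⟨C, hC, hgrowth⟩ := exists_norm_riemannZeta_le_exp_log_mul
  -- The disc of radius `13 / 4` contains the segment, that of radius `7 / 2` lies in `-1 / 2 ≤ re`.
  set A : ℝ := Real.log (7 / 2 / (33 / 10)) with hA
  set B : ℝ := 4 * (33 / 10 + 13 / 4) / (33 / 10 - 13 / 4) ^ 2 with hB
  have : 0 < A := Real.log_pos (by norm_num)
  have : 0 < B := by norm_num [hB]
  refine ⟨(B + (1 / δ + 5) / A) * C, by positivity, fun T hT hadm σ ha hb ↦ ?_⟩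
  have hlog := four_le_log hT
  have h := norm_logDeriv_le_of_forall_zero_le_norm_sub (f := riemannZeta)
    (c := (3 : ℝ) + T * I) (z₀ := σ + T * I) (d := δ / Real.log T) (M := C * Real.log T)
    (by norm_num : (13 / 4 : ℝ) < 33 / 10) (by norm_num : (33 / 10 : ℝ) < 7 / 2) (by positivity)
    (by positivity) (diffContOnCl_riemannZeta_ball (by linarith))
    (norm_pos_iff.1 (one_half_pos.trans_le (half_le_norm_riemannZeta (by simp))))
    (hgrowth T hT) ?_ fun ρ hρ hζρ ↦ hadm.div_log_le_norm_sub hζρ ?_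
  · refine h.trans ?_
    calc _ = (B * 1 + (1 / δ * Real.log T + 5 * 1) / A) * (C * Real.log T) := by
          rw [← hA, ← hB, one_div_div]
          ring
      _ ≤ (B * Real.log T + (1 / δ * Real.log T + 5 * Real.log T) / A) * (C * Real.log T) := by
        gcongr <;> linarith
      _ = _ := by ring
  · rw [add_sub_add_right_eq_sub, ← ofReal_sub, norm_real, Real.norm_eq_abs, abs_le]
    constructor <;> linarith
  · have him := (abs_le.1 (abs_re_sub_le_and_abs_im_sub_le hρ).2).1
    exact ne_of_gt (by linarith)

theorem exists_norm_riemannZeta_le_log_mul_rpow :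
    ∃ C > 0, ∀ T ≥ 100, ∀ z : ℂ, |z.im - T| ≤ 1 → -(2 / Real.log T) ≤ z.re →
      z.re ≤ 1 + 2 / Real.log T → ‖riemannZeta z‖ ≤ C * Real.log T * T ^ ((1 - z.re) / 2) := by
  obtain ⟨C, hC, hconvexity⟩ := exists_norm_riemannZeta_le_convexity
  refine ⟨C * Real.exp 1, by positivity, fun T hT z him ha hb ↦ ?_⟩
  have hlog := four_le_log hT
  have hη : 2 / Real.log T ≤ 1 / 2 := by rw [div_le_iff₀] <;> linarith
  have him' := abs_le.1 him
  have hz_im : |z.im| = z.im := abs_of_nonneg (by linarith)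
  have hT_pos : 0 < T := by linarith
  have hrpow : T ^ ((1 + 2 / Real.log T - z.re) / 2) =
      Real.exp 1 * T ^ ((1 - z.re) / 2) := by
    rw [show (1 + 2 / Real.log T - z.re) / 2 = (Real.log T)⁻¹ + (1 - z.re) / 2 by ring,
      Real.rpow_add hT_pos, Real.rpow_inv_log hT_pos (by linarith)]
  calc ‖riemannZeta z‖
      ≤ C / (2 / Real.log T) * |z.im| ^ ((1 + 2 / Real.log T - z.re) / 2) :=
        hconvexity _ (by positivity) hη z ha hb (by linarith)
    _ ≤ C / (2 / Real.log T) * (2 * T ^ ((1 + 2 / Real.log T - z.re) / 2)) := by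
      gcongr
      exact rpow_le_two_mul_rpow (abs_nonneg _) (by linarith) (by linarith) (by linarith)
    _ = C * Real.exp 1 * Real.log T * T ^ ((1 - z.re) / 2) := by
      rw [hrpow]
      field_simp

theorem exists_norm_iteratedDeriv_riemannZeta_le (n : ℕ) :
    ∃ K > 0, ∀ T ≥ 100, ∀ σ : ℝ, -(1 / Real.log T) ≤ σ → σ ≤ 1 + 1 / Real.log T →
      ‖iteratedDeriv n riemannZeta (σ + T * I)‖ ≤
        K * Real.log T ^ (n + 1) * T ^ ((1 - σ) / 2) := by
  obtain ⟨C, hC, hζ⟩ := exists_norm_riemannZeta_le_log_mul_rpow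
  refine ⟨n.factorial * (C * Real.exp 1), by positivity, fun T hT σ ha hb ↦ ?_⟩
  have hlog := four_le_log hT
  have hT_pos : 0 < T := by linarith
  have hr_pos : 0 < 1 / Real.log T := by positivity
  have hr : 1 / Real.log T ≤ 1 := by rw [div_le_iff₀] <;> linarith
  have htwo : 2 / Real.log T = 1 / Real.log T + 1 / Real.log T := by ring
  have hsphere : ∀ z ∈ sphere (σ + T * I) (1 / Real.log T),
      ‖riemannZeta z‖ ≤ C * Real.log T * (Real.exp 1 * T ^ ((1 - σ) / 2)) := by
    intro z hz
    obtain ⟨hre, him⟩ := abs_re_sub_le_and_abs_im_sub_le (sphere_subset_closedBall hz)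
    rw [abs_le] at hre
    refine (hζ T hT z (him.trans hr) (by linarith) (by linarith)).trans ?_
    gcongr
    rw [← Real.rpow_inv_log hT_pos (by linarith), ← Real.rpow_add hT_pos, inv_eq_one_div]
    gcongr <;> linarith
  refine (norm_iteratedDeriv_le_of_forall_mem_sphere_norm_le n hr_pos
    (diffContOnCl_riemannZeta_ball (by linarith)) hsphere).trans_eq ?_
  rw [one_div, inv_pow, div_inv_eq_mul]
  ring

theorem AdmissibleHeight.exists_norm_logDeriv_mul_norm_iteratedDeriv_le (n : ℕ) (hδ : 0 < δ) :
    ∃ K > 0, ∀ T ≥ 100, AdmissibleHeight δ T →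
      ∀ σ : ℝ, -(1 / Real.log T) ≤ σ → σ ≤ 1 + 1 / Real.log T →
        ‖logDeriv riemannZeta (σ + T * I)‖ * ‖iteratedDeriv n riemannZeta (σ + T * I)‖ ≤
          K * Real.log T ^ (n + 3) * T ^ ((1 - σ) / 2) := by
  obtain ⟨K₁, hK₁, hlogDeriv⟩ := exists_norm_logDeriv_riemannZeta_le hδ
  obtain ⟨K₂, hK₂, hiterated⟩ := exists_norm_iteratedDeriv_riemannZeta_le n
  refine ⟨K₁ * K₂, by positivity, fun T hT hadm σ ha hb ↦ ?_⟩
  have hlog : 1 / Real.log T ≤ 1 / 4 := one_div_le_one_div_of_le four_pos (four_le_log hT)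
  calc _ ≤ K₁ * Real.log T ^ 2 * (K₂ * Real.log T ^ (n + 1) * T ^ ((1 - σ) / 2)) := by
        gcongr
        exacts [hlogDeriv T hT hadm σ (by linarith) (by linarith), hiterated T hT σ ha hb]
    _ = _ := by ring

theorem continuous_rpow_one_sub_div_two (hT : 0 < T) :
    Continuous fun σ : ℝ ↦ T ^ ((1 - σ) / 2) :=
  Continuous.rpow continuous_const (by fun_prop) fun _ ↦ Or.inl hT.ne'

theorem integral_rpow_one_sub_div_two_le (hT : 1 < T) :
    ∫ σ in (-(1 / Real.log T))..(1 + 1 / Real.log T), T ^ ((1 - σ) / 2) ≤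
      2 / Real.log T * (Real.exp (1 / 2) * T ^ (1 / 2 : ℝ)) := by
  have hT_pos : 0 < T := by linarith
  have hlog : 0 < Real.log T := Real.log_pos hT
  have hderiv (x : ℝ) :
      HasDerivAt (fun σ : ℝ ↦ -(2 / Real.log T) * T ^ ((1 - σ) / 2)) (T ^ ((1 - x) / 2)) x := by
    refine (((((hasDerivAt_id x).const_sub 1).div_const 2).const_rpow hT_pos).const_mul
      (-(2 / Real.log T))).congr_deriv ?_
    simp only [id]
    field_simp
  have hleft : T ^ ((1 - -(1 / Real.log T)) / 2) = Real.exp (1 / 2) * T ^ (1 / 2 : ℝ) := by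
    rw [Real.rpow_def_of_pos hT_pos, Real.rpow_def_of_pos hT_pos, ← Real.exp_add]
    congr 1
    field_simp
    ring
  rw [intervalIntegral.integral_eq_sub_of_hasDerivAt (fun x _ ↦ hderiv x)
    ((continuous_rpow_one_sub_div_two hT_pos).intervalIntegrable _ _), hleft]
  have : 0 ≤ 2 / Real.log T * T ^ ((1 - (1 + 1 / Real.log T)) / 2) := by positivity
  linarith

end HorizontalLine

/-- for admissible `T` and `c = 1 + 1/log T`,
`∫_{1-c}^{c} |(ζ'/ζ)(σ+iT)| |ζ^{(n)}(σ+iT)| dσ ≪ T^{1/2} log^{n+2} T`,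
with implied constant depending only on `n` and `δ`. -/
theorem top_contour_bound (n : ℕ) (hn : 1 ≤ n) (δ : ℝ) (hδ : 0 < δ) :
    ∃ K > (0 : ℝ), ∃ T₀ : ℝ, ∀ T ≥ T₀, AdmissibleHeight δ T →
      ∀ c : ℝ, c = 1 + 1 / Real.log T →
        (∫ σ in (1 - c)..c,
            ‖deriv riemannZeta (↑σ + ↑T * I) / riemannZeta (↑σ + ↑T * I)‖ *
              ‖iteratedDeriv n riemannZeta (↑σ + ↑T * I)‖) ≤
          K * T ^ ((1 : ℝ) / 2) * Real.log T ^ (n + 2) := by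
  obtain ⟨K, hK, hbound⟩ := AdmissibleHeight.exists_norm_logDeriv_mul_norm_iteratedDeriv_le n hδ
  refine ⟨K * (2 * Real.exp (1 / 2)), by positivity, 100, ?_⟩
  rintro T hT hadm c rfl
  have hlog : 0 < Real.log T := by linarith [four_le_log hT]
  have hinv : 0 < 1 / Real.log T := one_div_pos.2 hlog
  have hcont := (continuous_rpow_one_sub_div_two (by linarith : 0 < T)).const_mul
    (K * Real.log T ^ (n + 3))
  simp only [← logDeriv_apply, sub_add_cancel_left]
  calc _ ≤ ∫ σ in (-(1 / Real.log T))..(1 + 1 / Real.log T),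
            K * Real.log T ^ (n + 3) * T ^ ((1 - σ) / 2) := by
        refine (Real.le_norm_self _).trans (intervalIntegral.norm_integral_le_of_norm_le
          (by linarith) (.of_forall fun σ hσ ↦ ?_) (hcont.intervalIntegrable _ _))
        rw [norm_mul, norm_norm, norm_norm]
        exact hbound T hT hadm σ hσ.1.le hσ.2
    _ ≤ K * Real.log T ^ (n + 3) *
          (2 / Real.log T * (Real.exp (1 / 2) * T ^ (1 / 2 : ℝ))) := by
        rw [intervalIntegral.integral_const_mul]
        gcongr
        exact integral_rpow_one_sub_div_two_le (by linarith)
    _ = _ := by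
        rw [pow_succ _ (n + 2)]
        field_simp
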